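/- Let E be a finite-dimensional real inner product space, ω a nondegenerate alternating bilinear form on E, and B : E → E the linear map determined by ⟪ξ, η⟫ = ω(ξ, B η) for all ξ, η ∈ E. Let S : E → E be a self-adjoint positive definite linear map with S∘S = −(B∘B) and S∘B = B∘S, and let J : E → E be the linear map with S∘J = B (i.e. J = S⁻¹∘B). Then: (a) J∘J = −id; (b) the bilinear form g(ξ,η) := ω(ξ, J η) is symmetric; (c) g(ξ,ξ) = ⟪ξ, S⁻¹ ξ⟫ > 0 for every ξ ≠ 0. In other words, J is a complex structure on E compatible with ω. -/

import Mathlib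

/-- The map `J = S⁻¹ ∘ B` is an `ω`-compatible complex structure, where `B` is determined
by `⟪ξ, η⟫ = ω ξ (B η)` and `S` is the self-adjoint positive definite square root of
`-B∘B` commuting with `B` (with two-sided inverse `T`). -/
theorem stmt3 {E : Type*} [NormedAddCommGroup E] [InnerProductSpace ℝ E]
    [FiniteDimensional ℝ E]
    (ω : E →ₗ[ℝ] E →ₗ[ℝ] ℝ)
    (halt : ∀ ξ : E, ω ξ ξ = 0)
    (hnd : ∀ ξ : E, (∀ η : E, ω ξ η = 0) → ξ = 0)
    (B : E →ₗ[ℝ] E)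
    (hB : ∀ ξ η : E, (inner ℝ ξ η : ℝ) = ω ξ (B η))
    (S : E →ₗ[ℝ] E)
    (hSsa : ∀ x y : E, (inner ℝ (S x) y : ℝ) = (inner ℝ x (S y) : ℝ))
    (hSpd : ∀ x : E, x ≠ 0 → 0 < (inner ℝ (S x) x : ℝ))
    (hSS : S ∘ₗ S = -(B ∘ₗ B))
    (hSB : S ∘ₗ B = B ∘ₗ S)
    (T : E →ₗ[ℝ] E) (hST : S ∘ₗ T = LinearMap.id) (hTS : T ∘ₗ S = LinearMap.id)
    (J : E →ₗ[ℝ] E) (hJ : S ∘ₗ J = B) :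
    J ∘ₗ J = -LinearMap.id ∧
      (∀ ξ η : E, ω ξ (J η) = ω η (J ξ)) ∧
      ∀ ξ : E, ω ξ (J ξ) = (inner ℝ ξ (T ξ) : ℝ) ∧ (ξ ≠ 0 → 0 < ω ξ (J ξ)) := by
  have hst : ∀ x, S (T x) = x := fun x => LinearMap.congr_fun hST x
  have hts : ∀ x, T (S x) = x := fun x => LinearMap.congr_fun hTS x
  have hsb : ∀ x, S (B x) = B (S x) := fun x => LinearMap.congr_fun hSB x
  have hss : ∀ x, S (S x) = -B (B x) := fun x => LinearMap.congr_fun hSS x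
  have hj : ∀ x, S (J x) = B x := fun x => LinearMap.congr_fun hJ x
  have inj : ∀ x y, S x = S y → x = y := fun x y h => by
    rw [← hts x, h, hts]
  have hJT : ∀ x, J x = B (T x) := fun x => inj _ _ (by rw [hj, hsb, hst])
  have key : ∀ ξ η, ω ξ (J η) = (inner ℝ ξ (T η) : ℝ) := fun ξ η => by
    rw [hJT, hB]
  refine ⟨?_, ?_, ?_⟩
  · ext x
    apply inj
    apply inj
    simp only [LinearMap.comp_apply, LinearMap.neg_apply, LinearMap.id_apply, map_neg]
    rw [hj, hsb, hj, hss, neg_neg]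
  · intro ξ η
    rw [key, key]
    have h := hSsa (T ξ) (T η)
    rw [hst, hst] at h
    rw [h, real_inner_comm]
  · intro ξ
    refine ⟨key ξ ξ, fun h => ?_⟩
    rw [key]
    have h0 : T ξ ≠ 0 := fun h0 => h (by rw [← hst ξ, h0, map_zero])
    have h1 := hSpd (T ξ) h0
    rwa [hst] at h1
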